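/- Let A ∈ ℝ^{n×n} and D ∈ ℝ^{d×d} be symmetric matrices and B ∈ ℝ^{n×d}. If the smallest eigenvalue of A is at least ‖B‖₂ and the smallest eigenvalue of D is at least ‖B‖₂, then the symmetric block matrix M = [[A, B], [Bᵀ, D]] is positive semidefinite. -/

import Mathlib

open Matrix BigOperators

/-- Euclidean norm of a vector. -/
noncomputable def vnorm {k : ℕ} (v : Fin k → ℝ) : ℝ := Real.sqrt (v ⬝ᵥ v)

/-- Spectral norm of a matrix: the largest singular value, i.e. the supremum of ‖Ax‖
over unit vectors x. -/
noncomputable def spNorm {n d : ℕ} (A : Matrix (Fin n) (Fin d) ℝ) : ℝ :=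
  sSup {c | ∃ x : Fin d → ℝ, vnorm x = 1 ∧ c = vnorm (A *ᵥ x)}

/-!
Split `[[A, B], [Bᴴ, D]]` as `[[A - a, 0], [0, D - b]] + [[a, B], [Bᴴ, b]]`. The quadratic form of
the second summand is `a‖x‖² + 2 Re ⟪x, By⟫ + b‖y‖²`, and when `‖B‖² ≤ ab` Cauchy–Schwarz and
AM-GM give `2|⟪x, By⟫| ≤ 2‖B‖‖x‖‖y‖ ≤ a‖x‖² + b‖y‖²`.
-/

theorem posSemidef_fromBlocks_zero {R m n : Type*} [Finite m] [Finite n] [Ring R]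
    [PartialOrder R] [StarRing R] [AddLeftMono R] {A : Matrix m m R} {D : Matrix n n R}
    (hA : A.PosSemidef) (hD : D.PosSemidef) : (fromBlocks A 0 0 D).PosSemidef := by
  have := Fintype.ofFinite m
  have := Fintype.ofFinite n
  refine .of_dotProduct_mulVec_nonneg
    (.fromBlocks hA.isHermitian conjTranspose_zero hD.isHermitian) fun z ↦ ?_
  obtain ⟨x, y, rfl⟩ : ∃ x y, z = Sum.elim x y := ⟨_, _, (Sum.elim_comp_inl_inr z).symm⟩
  simpa [fromBlocks_mulVec, Function.star_sumElim] using
    add_nonneg (hA.dotProduct_mulVec_nonneg x) (hD.dotProduct_mulVec_nonneg y)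

section BlockMatrix

open scoped ComplexOrder InnerProductSpace Matrix.Norms.L2Operator

variable {𝕜 m n : Type*} [RCLike 𝕜] [Fintype m] [Fintype n]

theorem star_dotProduct_self_eq_norm_toLp_sq (y : n → 𝕜) :
    star y ⬝ᵥ y = ((‖WithLp.toLp 2 y‖ ^ 2 : ℝ) : 𝕜) := by
  rw [dotProduct_comm, ← EuclideanSpace.inner_toLp_toLp, inner_self_eq_norm_sq_to_K,
    RCLike.ofReal_pow]

variable [DecidableEq n]

theorem norm_inner_toLp_mulVec_le (B : Matrix m n 𝕜) (x : m → 𝕜) (y : n → 𝕜) :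
    ‖⟪WithLp.toLp 2 x, WithLp.toLp 2 (B *ᵥ y)⟫_𝕜‖ ≤
      ‖B‖ * ‖WithLp.toLp 2 x‖ * ‖WithLp.toLp 2 y‖ :=
  calc
    _ ≤ ‖WithLp.toLp 2 x‖ * ‖WithLp.toLp 2 (B *ᵥ y)‖ := norm_inner_le_norm _ _
    _ ≤ ‖WithLp.toLp 2 x‖ * (‖B‖ * ‖WithLp.toLp 2 y‖) := by
      gcongr
      exact l2_opNorm_mulVec B (WithLp.toLp 2 y)
    _ = _ := by ring

variable [DecidableEq m]

theorem star_dotProduct_fromBlocks_smul_one_mulVec (B : Matrix m n 𝕜) (a b : ℝ)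
    (x : m → 𝕜) (y : n → 𝕜) :
    star (Sum.elim x y) ⬝ᵥ (fromBlocks (a • 1) B Bᴴ (b • 1) *ᵥ Sum.elim x y) =
      ((a * ‖WithLp.toLp 2 x‖ ^ 2 + 2 * RCLike.re ⟪WithLp.toLp 2 x, WithLp.toLp 2 (B *ᵥ y)⟫_𝕜 +
        b * ‖WithLp.toLp 2 y‖ ^ 2 : ℝ) : 𝕜) := by
  set r := ⟪WithLp.toLp 2 x, WithLp.toLp 2 (B *ᵥ y)⟫_𝕜
  have upper_right : star x ⬝ᵥ (B *ᵥ y) = r := dotProduct_comm _ _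
  have lower_left : star y ⬝ᵥ (Bᴴ *ᵥ x) = star r := by
    rw [← upper_right, star_dotProduct, star_mulVec, conjTranspose_conjTranspose,
      ← dotProduct_mulVec]
  simp only [Function.star_sumElim, fromBlocks_mulVec, Sum.elim_comp_inl, Sum.elim_comp_inr,
    sumElim_dotProduct_sumElim, smul_mulVec, one_mulVec, dotProduct_add, dotProduct_smul,
    upper_right, lower_left, star_dotProduct_self_eq_norm_toLp_sq, RCLike.star_def,
    RCLike.real_smul_eq_coe_mul]
  push_cast
  linear_combination RCLike.add_conj r

theorem posSemidef_fromBlocks_smul_one {B : Matrix m n 𝕜} {a b : ℝ} (ha : 0 ≤ a) (hb : 0 ≤ b)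
    (hB : ‖B‖ ^ 2 ≤ a * b) : (fromBlocks (a • 1) B Bᴴ (b • 1)).PosSemidef := by
  refine .of_dotProduct_mulVec_nonneg
    (.fromBlocks (isHermitian_one.smul (.all a)) rfl (isHermitian_one.smul (.all b))) fun z ↦ ?_
  obtain ⟨x, y, rfl⟩ : ∃ x y, z = Sum.elim x y := ⟨_, _, (Sum.elim_comp_inl_inr z).symm⟩
  rw [star_dotProduct_fromBlocks_smul_one_mulVec, RCLike.ofReal_nonneg]
  set X := ‖WithLp.toLp 2 x‖
  set Y := ‖WithLp.toLp 2 y‖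
  have cross_term : -(‖B‖ * X * Y) ≤ RCLike.re ⟪WithLp.toLp 2 x, WithLp.toLp 2 (B *ᵥ y)⟫_𝕜 :=
    (abs_le.1 <| (RCLike.abs_re_le_norm _).trans (norm_inner_toLp_mulVec_le B x y)).1
  have am_gm : 2 * (‖B‖ * X * Y) ≤ a * X ^ 2 + b * Y ^ 2 := by
    refine two_mul_le_add_of_sq_le_mul (by positivity) (by positivity) ?_
    calc (‖B‖ * X * Y) ^ 2 = ‖B‖ ^ 2 * (X * Y) ^ 2 := by ring
      _ ≤ a * b * (X * Y) ^ 2 := by gcongr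
      _ = a * X ^ 2 * (b * Y ^ 2) := by ring
  linarith

theorem block_diag_dominance_posSemidef_general {A : Matrix m m 𝕜} {B : Matrix m n 𝕜}
    {D : Matrix n n 𝕜} {a b : ℝ} (ha : 0 ≤ a) (hb : 0 ≤ b) (hB : ‖B‖ ^ 2 ≤ a * b)
    (hA : (A - a • (1 : Matrix m m 𝕜)).PosSemidef)
    (hD : (D - b • (1 : Matrix n n 𝕜)).PosSemidef) :
    (fromBlocks A B Bᴴ D).PosSemidef := by
  simpa [fromBlocks_add] using
    (posSemidef_fromBlocks_zero hA hD).add (posSemidef_fromBlocks_smul_one ha hb hB)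

end BlockMatrix

section SpectralNorm

open scoped Matrix.Norms.L2Operator

theorem vnorm_eq_norm_toLp {k : ℕ} (v : Fin k → ℝ) : vnorm v = ‖WithLp.toLp 2 v‖ := by
  simp only [vnorm, EuclideanSpace.norm_eq, dotProduct, Real.norm_eq_abs, sq_abs, ← sq]

theorem spNorm_eq_l2_opNorm {n d : ℕ} (B : Matrix (Fin n) (Fin d) ℝ) : spNorm B = ‖B‖ := by
  rw [l2_opNorm_def, ← ContinuousLinearMap.sSup_sphere_eq_norm, spNorm]
  congr 1
  ext c
  constructor
  · rintro ⟨x, hx, rfl⟩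
    exact ⟨WithLp.toLp 2 x, by simpa [vnorm_eq_norm_toLp] using hx, (vnorm_eq_norm_toLp _).symm⟩
  · rintro ⟨x, hx, rfl⟩
    exact ⟨x.ofLp, by simpa [vnorm_eq_norm_toLp] using hx, (vnorm_eq_norm_toLp _).symm⟩

theorem spNorm_nonneg {n d : ℕ} (B : Matrix (Fin n) (Fin d) ℝ) : 0 ≤ spNorm B :=
  spNorm_eq_l2_opNorm B ▸ norm_nonneg B

end SpectralNorm

/-- Block diagonal dominance (Feingold–Varga) sufficient condition: if the smallest
eigenvalues of the symmetric diagonal blocks A and D are both at least ‖B‖₂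
(i.e. A − ‖B‖₂I ⪰ 0 and D − ‖B‖₂I ⪰ 0), then [[A, B], [Bᵀ, D]] ⪰ 0. -/
theorem block_diag_dominance_posSemidef
    {n d : ℕ} (A : Matrix (Fin n) (Fin n) ℝ) (D : Matrix (Fin d) (Fin d) ℝ)
    (B : Matrix (Fin n) (Fin d) ℝ) (hA : A.IsSymm) (hD : D.IsSymm)
    (hA2 : (A - spNorm B • (1 : Matrix (Fin n) (Fin n) ℝ)).PosSemidef)
    (hD2 : (D - spNorm B • (1 : Matrix (Fin d) (Fin d) ℝ)).PosSemidef) :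
    (Matrix.fromBlocks A B Bᵀ D).PosSemidef := by
  rw [← conjTranspose_eq_transpose_of_trivial]
  exact block_diag_dominance_posSemidef_general (spNorm_nonneg B) (spNorm_nonneg B)
    (by rw [spNorm_eq_l2_opNorm, sq]) hA2 hD2
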